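/- Let V be a leafless symmetric directed tree with |Chi(v)|<∞ for all v∈V, and let λ=(λ_n)_n be a symmetric weight of nonzero scalars. Let X=ℓ^p(V) with 1<p<∞ (with conjugate exponent p*) or X=c_0(V), and suppose the weighted backward shift B_λ is an operator on X. (a) If the tree is rooted, or unrooted without a free left end, then B_λ is chaotic if and only if: ∑_{n=1}^∞ 1/((γ_0⋯γ_{n-1})^{p/p*}·|λ_1⋯λ_n|^p) < ∞ when X=ℓ^p(V), respectively γ_0⋯γ_{n-1}·|λ_1⋯λ_n| → ∞ as n→∞ when X=c_0(V). (b) If the tree is unrooted with a free left end, then B_λ is chaotic if and only if the condition in (a) holds and, in addition, ∑_{n=1}^∞ |λ_{-n+1}⋯λ_0|^p < ∞ when X=ℓ^p(V), respectively λ_{-n+1}⋯λ_0 → 0 as n→∞ when X=c_0(V). -/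

import Mathlib

open scoped ENNReal NNReal Topology Classical
open Filter

namespace PaperTree

/-! ### Directed trees -/

variable {V : Type*}

/-- Iterated parent map of a directed tree given by a parent function. -/
def parIter (par : V → Option V) : ℕ → V → Option V
  | 0, v => some v
  | n + 1, v => (par v).bind (parIter par n)

/-- `par` is the parent function of a (countable, connected, acyclic) directed tree on `V`,
in which every vertex has at most one parent and at most one vertex (the root) has none. -/
structure IsDirectedTree (par : V → Option V) : Prop where
  countable : Countable V
  acyclic : ∀ (v : V) (n : ℕ), 0 < n → parIter par n v ≠ some v
  connected : ∀ u v : V, ∃ (m n : ℕ) (w : V), parIter par m u = some w ∧ parIter par n v = some w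
  root_unique : ∀ u v : V, par u = none → par v = none → u = v

/-- The set of children of `v`. -/
def children (par : V → Option V) (v : V) : Set V := {u : V | par u = some v}

/-- The set of descendants of `v` (including `v`); the rooted subtree `V(v)`. -/
def descendants (par : V → Option V) (v : V) : Set V := {u : V | ∃ n : ℕ, parIter par n u = some v}

def IsLeafV (par : V → Option V) (v : V) : Prop := children par v = ∅

def Leafless (par : V → Option V) : Prop := ∀ v : V, children par v ≠ ∅

def IsRoot (par : V → Option V) (v : V) : Prop := par v = none

def Rooted (par : V → Option V) : Prop := ∃ v : V, IsRoot par v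

def Unrooted (par : V → Option V) : Prop := ∀ v : V, par v ≠ none

/-- The tree has a free left end: some vertex all of whose (proper) ancestors
have exactly one child. -/
def HasFreeLeftEnd (par : V → Option V) : Prop :=
  ∃ v : V, ∀ n : ℕ, 1 ≤ n → ∀ w : V, parIter par n v = some w → ∃! u : V, u ∈ children par w

/-- The tree has finite length (all branches have uniformly bounded length). -/
def FiniteLength (par : V → Option V) : Prop := ∃ m : ℕ, ∀ u : V, parIter par (m + 1) u = none

/-- Product of the weights along the upward path of length `n` ending at `u`;
for `u ∈ Chi^n(v)` this is `λ(v → u)`, and `pathProd par lam n v = λ(par^n(v) → v)`. -/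
def pathProd {𝕜 : Type*} [Monoid 𝕜] (par : V → Option V) (lam : V → 𝕜) : ℕ → V → 𝕜
  | 0, _ => 1
  | n + 1, u => lam u * ((par u).elim 1 (pathProd par lam n))

/-- A (finite or infinite, maximal) branch starting at `v`, encoded with `Option`. -/
def IsOptBranch (par : V → Option V) (v : V) (b : ℕ → Option V) : Prop :=
  b 0 = some v ∧
  (∀ (k : ℕ) (w : V), b k = some w →
      (children par w = ∅ ∧ b (k + 1) = none) ∨ ∃ u ∈ children par w, b (k + 1) = some u) ∧
  ∀ k : ℕ, b k = none → b (k + 1) = none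

/-- An infinite branch starting at `v` (adequate for leafless trees). -/
def IsBranch (par : V → Option V) (v : V) (b : ℕ → V) : Prop :=
  b 0 = v ∧ ∀ k : ℕ, b (k + 1) ∈ children par (b k)

/-- The `[0,∞]`-valued absolute weight associated with a scalar weight. -/
noncomputable def nw {𝕜 : Type*} [RCLike 𝕜] (μ : V → 𝕜) : V → ℝ≥0∞ := fun v => (‖μ v‖₊ : ℝ≥0∞)

/-! ### Linear dynamics -/

section Dynamics

variable {𝕜 : Type*} [RCLike 𝕜] {X : Type*} [AddCommGroup X] [Module 𝕜 X] [TopologicalSpace X]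

/-- An operator is hypercyclic if some vector has dense orbit. -/
def Hypercyclic (T : X →L[𝕜] X) : Prop :=
  ∃ x : X, Dense (Set.range fun n : ℕ => (T ^ n) x)

/-- A periodic point of the operator `T`. -/
def IsPeriodicPoint (T : X →L[𝕜] X) (x : X) : Prop :=
  ∃ N : ℕ, 1 ≤ N ∧ (T ^ N) x = x

/-- An operator is chaotic if it is hypercyclic and has a dense set of periodic points. -/
def ChaoticOp (T : X →L[𝕜] X) : Prop :=
  Hypercyclic T ∧ Dense {x : X | IsPeriodicPoint T x}

/-- Topological mixing. -/
def MixingOp (T : X →L[𝕜] X) : Prop :=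
  ∀ U₁ U₂ : Set X, IsOpen U₁ → IsOpen U₂ → U₁.Nonempty → U₂.Nonempty →
    ∃ m : ℕ, ∀ n : ℕ, m ≤ n → ((⇑(T ^ n)) '' U₁ ∩ U₂).Nonempty

/-- Weak mixing: `T ⊕ T` is hypercyclic on `X × X`. -/
def WeaklyMixingOp (T : X →L[𝕜] X) : Prop :=
  Hypercyclic (T.prodMap T)

variable {V : Type*}

/-- `T` is (a representation via the coefficient embedding `ι` of) the weighted backward
shift `B_λ` as an operator on `X`: for every `x ∈ X` and every vertex `v` the defining
series converges unconditionally to the `v`-th coefficient of `T x`. -/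
def IsShiftRep (par : V → Option V) (lam : V → 𝕜) (ι : X →ₗ[𝕜] V → 𝕜) (T : X →L[𝕜] X) : Prop :=
  ∀ (x : X) (v : V), HasSum (fun u : ↥(children par v) => lam u.1 * ι x u.1) (ι (T x) v)

end Dynamics

/-! ### The generalized continued fractions `c_p` and resistances `r_p` -/

section Constants

/-- Conjugate exponent. -/
noncomputable def conjExp (p : ℝ) : ℝ := p / (p - 1)

variable {V : Type*}

/-- `cpAux chi w p m v` is the continued fraction `c_p` of the subtree of descendants of `v`
(with respect to the children map `chi`) truncated at depth `m`, with weight `w`. -/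
noncomputable def cpAux (chi : V → Set V) (w : V → ℝ≥0∞) (p : ℝ) : ℕ → V → ℝ≥0∞
  | 0, _ => 0
  | m + 1, v =>
      if chi v = ∅ then 0
      else (∑' u : ↥(chi v),
              (w u.1 ^ p + cpAux chi w p m u.1 ^ p) ^ (-(conjExp p / p))) ^ (-(1 / conjExp p))

/-- The continued fraction `c_p(V(v), w)` of order `1 < p < ∞`. -/
noncomputable def cpC (chi : V → Set V) (w : V → ℝ≥0∞) (p : ℝ) (v : V) : ℝ≥0∞ :=
  ⨆ m : ℕ, cpAux chi w p m v

/-- The resistance `r_p(V(v), w)` of order `1 < p < ∞`. -/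
noncomputable def rpC (chi : V → Set V) (w : V → ℝ≥0∞) (p : ℝ) (v : V) : ℝ≥0∞ :=
  (w v ^ p + cpC chi w p v ^ p) ^ (1 / p)

/-- Truncated continued fraction of order `p = ∞`. -/
noncomputable def cInfAux (chi : V → Set V) (w : V → ℝ≥0∞) : ℕ → V → ℝ≥0∞
  | 0, _ => 0
  | m + 1, v =>
      if chi v = ∅ then 0
      else (∑' u : ↥(chi v), (max (w u.1) (cInfAux chi w m u.1))⁻¹)⁻¹

/-- The continued fraction `c_∞(V(v), w)`. -/
noncomputable def cInfC (chi : V → Set V) (w : V → ℝ≥0∞) (v : V) : ℝ≥0∞ :=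
  ⨆ m : ℕ, cInfAux chi w m v

/-- The resistance `r_∞(V(v), w)`. -/
noncomputable def rInfC (chi : V → Set V) (w : V → ℝ≥0∞) (v : V) : ℝ≥0∞ :=
  max (w v) (cInfC chi w v)

end Constants

/-! ### Concrete sequence spaces `ℓ^p(V, μ)` and `c₀(V, μ)`, up to isometry -/

section SpaceRep

variable {𝕜 : Type*} [RCLike 𝕜] {V : Type*} {X : Type*} [NormedAddCommGroup X] [NormedSpace 𝕜 X]

/-- `X` is (an isometric copy of) the weighted space `ℓ^p(V, μ)`, the identification being
given by the coefficient embedding `ι`. -/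
def IsLpSpaceRep (ι : X →ₗ[𝕜] V → 𝕜) (μ : V → 𝕜) (p : ℝ) : Prop :=
  Function.Injective ι ∧
  (∀ f : V → 𝕜, (∑' v : V, (‖f v * μ v‖₊ : ℝ≥0∞) ^ p) < ⊤ ↔ f ∈ Set.range ι) ∧
  ∀ x : X, (‖x‖₊ : ℝ≥0∞) = (∑' v : V, (‖ι x v * μ v‖₊ : ℝ≥0∞) ^ p) ^ (1 / p)

/-- `X` is (an isometric copy of) the weighted space `c₀(V, μ)`. -/
def IsC0SpaceRep (ι : X →ₗ[𝕜] V → 𝕜) (μ : V → 𝕜) : Prop :=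
  Function.Injective ι ∧
  (∀ f : V → 𝕜, (∀ ε : ℝ, 0 < ε → {v : V | ε ≤ ‖f v * μ v‖}.Finite) ↔ f ∈ Set.range ι) ∧
  ∀ x : X, (‖x‖₊ : ℝ≥0∞) = ⨆ v : V, (‖ι x v * μ v‖₊ : ℝ≥0∞)

end SpaceRep

/-- `γ_0 ⋯ γ_{n-1}` as an element of `[0,∞]`. -/
noncomputable def gamProd (γ : ℤ → ℕ) (n : ℕ) : ℝ≥0∞ :=
  ∏ k ∈ Finset.range n, (γ (k : ℤ) : ℝ≥0∞)

/-- `|λ_1 ⋯ λ_n|` as an element of `[0,∞]`. -/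
noncomputable def lamProdPos {𝕜 : Type*} [RCLike 𝕜] (Λ : ℤ → 𝕜) (n : ℕ) : ℝ≥0∞ :=
  ∏ k ∈ Finset.range n, (‖Λ ((k : ℤ) + 1)‖₊ : ℝ≥0∞)

/-- `|λ_{-n+1} ⋯ λ_0|` as an element of `[0,∞]`. -/
noncomputable def lamProdNeg {𝕜 : Type*} [RCLike 𝕜] (Λ : ℤ → 𝕜) (n : ℕ) : ℝ≥0∞ :=
  ∏ k ∈ Finset.range n, (‖Λ (-(k : ℤ))‖₊ : ℝ≥0∞)

section DynLemmas

variable {𝕜 : Type*} [RCLike 𝕜] {X : Type*} [NormedAddCommGroup X] [NormedSpace 𝕜 X]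
  [CompleteSpace X]

theorem birkhoff [TopologicalSpace.SeparableSpace X] (T : X →L[𝕜] X)
    (h : ∀ U W : Set X, IsOpen U → IsOpen W → U.Nonempty → W.Nonempty →
      ∃ n : ℕ, ∃ z ∈ U, (T ^ n) z ∈ W) : Hypercyclic T := by
  have : SecondCountableTopology X := UniformSpace.secondCountable_of_separable X
  let B := TopologicalSpace.countableBasis X
  have hB := TopologicalSpace.isBasis_countableBasis X
  have hd : Dense (⋂ W ∈ B, ⋃ n : ℕ, (⇑(T ^ n)) ⁻¹' W) := by
    apply dense_biInter_of_isOpen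
    · intro W hW
      exact isOpen_iUnion fun n => (hB.isOpen hW).preimage (T ^ n).continuous
    · exact TopologicalSpace.countable_countableBasis X
    · intro W hW
      rw [dense_iff_inter_open]
      intro U hU hUn
      obtain ⟨n, z, hz, hz'⟩ := h U W hU (hB.isOpen hW) hUn
        (TopologicalSpace.nonempty_of_mem_countableBasis hW)
      exact ⟨z, hz, Set.mem_iUnion.2 ⟨n, hz'⟩⟩
  obtain ⟨x, hx⟩ := hd.nonempty
  refine ⟨x, ?_⟩
  rw [hB.dense_iff]
  intro W hW _
  have := Set.mem_iInter₂.1 hx W hW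
  obtain ⟨n, hn⟩ := Set.mem_iUnion.1 this
  exact ⟨_, hn, n, rfl⟩

theorem sum_mult_small (f : ℕ → X) (hf : Summable f) (ε : ℝ) (hε : 0 < ε) :
    ∃ N0 : ℕ, ∀ N, N0 ≤ N → 1 ≤ N → ‖∑' j : ℕ, f ((j + 1) * N)‖ < ε := by
  obtain ⟨s, hs⟩ := hf.tsum_vanishing (Metric.ball_mem_nhds (0 : X) hε)
  refine ⟨s.sup id + 1, fun N hN hN1 => ?_⟩
  have hinj : Function.Injective (fun j : ℕ => (j + 1) * N) := by
    intro a b hab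
    have := Nat.eq_of_mul_eq_mul_right hN1 hab
    omega
  have h1 := hs (Set.range (fun j : ℕ => (j + 1) * N)) (by
    rw [Set.disjoint_left]
    rintro _ ⟨j, rfl⟩ hmem
    have h2 : (j + 1) * N ≤ s.sup id := Finset.le_sup (f := id) (Finset.mem_coe.1 hmem)
    nlinarith [Nat.zero_le (j * N)])
  rw [tsum_range (f := f) hinj] at h1
  simpa using h1

theorem chaos_criterion [TopologicalSpace.SeparableSpace X] (T : X →L[𝕜] X) (D : Set X)
    (hD : Dense D)
    (hs : ∀ x ∈ D, ∃ s : ℕ → X, s 0 = x ∧ (∀ n, T (s (n + 1)) = s n) ∧ Summable s)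
    (ht : ∀ x ∈ D, Summable fun n : ℕ => (T ^ n) x) : ChaoticOp T := by
  have hTs : ∀ s : ℕ → X, (∀ n, T (s (n + 1)) = s n) → ∀ n m, (T ^ n) (s (m + n)) = s m := by
    intro s h n
    induction n with
    | zero => intro m; simp
    | succ n ih =>
      intro m
      rw [pow_succ, mul_apply_eq_comp, ← add_assoc, h, ih]
  constructor
  · apply birkhoff
    intro U W hU hW hUn hWn
    obtain ⟨x, hxU, hxD⟩ := hD.inter_open_nonempty U hU hUn
    obtain ⟨y, hyW, hyD⟩ := hD.inter_open_nonempty W hW hWn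
    obtain ⟨s, hs0, hs1, hs2⟩ := hs y hyD
    have h1 : Tendsto (fun n => x + s n) atTop (𝓝 x) := by
      simpa using hs2.tendsto_atTop_zero.const_add x
    have h2 : Tendsto (fun n => (T ^ n) (x + s n)) atTop (𝓝 y) := by
      have h3 : ∀ n, (T ^ n) (x + s n) = (T ^ n) x + y := by
        intro n
        rw [map_add]
        have := hTs s hs1 n 0
        rw [zero_add] at this
        rw [this, hs0]
      simp_rw [h3]
      simpa using (ht x hxD).tendsto_atTop_zero.add_const y
    obtain ⟨n, hn1, hn2⟩ := ((h1.eventually (hU.mem_nhds hxU)).and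
      (h2.eventually (hW.mem_nhds hyW))).exists
    exact ⟨n, _, hn1, hn2⟩
  · rw [dense_iff_closure_eq, Set.eq_univ_iff_forall]
    have hsub : D ⊆ closure {x : X | IsPeriodicPoint T x} := by
      intro x hx
      rw [Metric.mem_closure_iff]
      intro ε hε
      obtain ⟨s, hs0, hs1, hs2⟩ := hs x hx
      have ht2 := ht x hx
      obtain ⟨N1, hN1⟩ := sum_mult_small s hs2 (ε / 2) (by positivity)
      obtain ⟨N2, hN2⟩ := sum_mult_small _ ht2 (ε / 2) (by positivity)
      set N := max (max N1 N2) 1 with hN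
      have hN1' := hN1 N (by omega) (by omega)
      have hN2' := hN2 N (by omega) (by omega)
      have hNpos : 1 ≤ N := by omega
      have hinj : Function.Injective (fun j : ℕ => j * N) := by
        intro a b hab
        exact Nat.eq_of_mul_eq_mul_right hNpos hab
      have hsj : Summable fun j : ℕ => s (j * N) := hs2.comp_injective hinj
      have htj : Summable fun j : ℕ => (T ^ (j * N)) x := ht2.comp_injective hinj
      have hsj1 : Summable fun j : ℕ => s ((j + 1) * N) :=
        (summable_nat_add_iff (f := fun j : ℕ => s (j * N)) 1).2 hsj
      have htj1 : Summable fun j : ℕ => (T ^ ((j + 1) * N)) x :=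
        (summable_nat_add_iff (f := fun j : ℕ => (T ^ (j * N)) x) 1).2 htj
      have e1 : ∑' j : ℕ, s (j * N) = x + ∑' j : ℕ, s ((j + 1) * N) := by
        rw [hsj.tsum_eq_zero_add]; simp [hs0]
      have e2 : ∑' j : ℕ, (T ^ ((j + 1) * N)) x
          = (T ^ N) x + ∑' j : ℕ, (T ^ ((j + 1 + 1) * N)) x := by
        rw [htj1.tsum_eq_zero_add]; simp
      refine ⟨(∑' j : ℕ, s (j * N)) + ∑' j : ℕ, (T ^ ((j + 1) * N)) x, ⟨N, hNpos, ?_⟩, ?_⟩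
      · rw [map_add, ContinuousLinearMap.map_tsum _ htj1]
        nth_rewrite 1 [e1]
        rw [map_add, ContinuousLinearMap.map_tsum _ hsj1, e2]
        have e3 : ∀ j : ℕ, (T ^ N) (s ((j + 1) * N)) = s (j * N) := by
          intro j
          rw [add_mul, one_mul]
          exact hTs s hs1 N _
        have e4 : ∀ j : ℕ, (T ^ N) ((T ^ ((j + 1) * N)) x) = (T ^ ((j + 1 + 1) * N)) x := by
          intro j
          rw [← mul_apply_eq_comp, ← pow_add]
          congr 2
          ring
        simp_rw [e3, e4]
        abel
      · rw [e1, dist_eq_norm]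
        have : x - (x + ∑' j : ℕ, s ((j + 1) * N) + ∑' j : ℕ, (T ^ ((j + 1) * N)) x)
          = - ((∑' j : ℕ, s ((j + 1) * N)) + ∑' j : ℕ, (T ^ ((j + 1) * N)) x) := by abel
        rw [this, norm_neg]
        refine (norm_add_le _ _).trans_lt ?_
        linarith
    intro x
    exact closure_minimal hsub isClosed_closure (hD x)

end DynLemmas

section GoodSpaces

variable {𝕜 : Type*} [RCLike 𝕜] {V : Type*} {X : Type*} [NormedAddCommGroup X] [NormedSpace 𝕜 X]

/-- function constant on blocks -/
noncomputable def blockFun (A : ℕ → Finset V) (c : ℕ → 𝕜) : V → 𝕜 := fun u =>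
  if h : ∃ n, u ∈ A n then c h.choose else 0

def BlockDisj (A : ℕ → Finset V) : Prop := ∀ u m n, u ∈ A m → u ∈ A n → m = n

theorem blockFun_mem {A : ℕ → Finset V} (hA : BlockDisj A) (c : ℕ → 𝕜) {u : V} {n : ℕ}
    (hu : u ∈ A n) : blockFun A c u = c n := by
  have h : ∃ n, u ∈ A n := ⟨n, hu⟩
  rw [blockFun, dif_pos h, hA u _ _ h.choose_spec hu]

theorem blockFun_not_mem {A : ℕ → Finset V} (c : ℕ → 𝕜) {u : V}
    (hu : ∀ n, u ∉ A n) : blockFun A c u = 0 := by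
  rw [blockFun, dif_neg]
  simpa using hu

structure Good (ι : X →ₗ[𝕜] V → 𝕜) (C : (ℕ → ℕ) → (ℕ → 𝕜) → Prop) : Prop where
  inj : Function.Injective ι
  coord : ∀ x v, ‖ι x v‖ ≤ ‖x‖
  solid : ∀ x (g : V → 𝕜), (∀ v, ‖g v‖ ≤ ‖ι x v‖) → g ∈ Set.range ι
  tail : ∀ x (ε : ℝ), 0 < ε → ∃ F : Finset V, ∀ y, (∀ v ∈ F, ι y v = 0) →
    (∀ v, ‖ι y v‖ ≤ ‖ι x v‖) → ‖y‖ ≤ ε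
  single : ∀ v, Pi.single v 1 ∈ Set.range ι
  flat : ∀ ε : ℝ, 0 < ε → ∃ N0 : ℕ, ∀ A : Finset V, N0 ≤ A.card → ∀ y,
    (∀ v ∈ A, ι y v = (A.card : 𝕜)⁻¹) → (∀ v ∉ A, ι y v = 0) → ‖y‖ ≤ ε
  avg : ∀ x (A : ℕ → Finset V), BlockDisj A →
    C (fun n => (A n).card) (fun n => ((A n).card : 𝕜)⁻¹ * ∑ u ∈ A n, ι x u)
  blk : ∀ (A : ℕ → Finset V) (c : ℕ → 𝕜), BlockDisj A → (∀ n, (A n).Nonempty) →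
    (blockFun A c ∈ Set.range ι ↔ C (fun n => (A n).card) c)
  shift : ∀ (N N' : ℕ → ℕ) (c c' : ℕ → 𝕜) (k : ℕ) (q : 𝕜), k ≠ 0 → q ≠ 0 →
    (∀ n, N (n + 1) = k * N' n) → (∀ n, c (n + 1) = q * c' n) → (C N c ↔ C N' c')

theorem block_inj {A : ℕ → Finset V} (hA : BlockDisj A) :
    Function.Injective (fun s : (Σ n, ↥(A n)) => (s.2 : V)) := by
  rintro ⟨m, u, hu⟩ ⟨n, v, hv⟩ h
  simp only at h
  subst h
  obtain rfl := hA u m n hu hv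
  rfl

theorem good_c0 (ι : X →ₗ[𝕜] V → 𝕜) (h : IsC0SpaceRep ι (fun _ : V => (1 : 𝕜))) :
    Good ι (fun _ c => Tendsto c atTop (𝓝 0)) := by
  obtain ⟨h1, h2, h3⟩ := h
  simp only [mul_one] at h2 h3
  have hcoord : ∀ x v, ‖ι x v‖ ≤ ‖x‖ := by
    intro x v
    have : (‖ι x v‖₊ : ℝ≥0∞) ≤ ‖x‖₊ := by
      rw [h3]; exact le_iSup (fun v => (‖ι x v‖₊ : ℝ≥0∞)) v
    exact_mod_cast this
  have hle : ∀ x (ε : ℝ), 0 ≤ ε → (∀ v, ‖ι x v‖ ≤ ε) → ‖x‖ ≤ ε := by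
    intro x ε hε hx
    lift ε to ℝ≥0 using hε
    have : (‖x‖₊ : ℝ≥0∞) ≤ ε := by
      rw [h3]
      exact iSup_le fun v => by exact_mod_cast hx v
    exact_mod_cast this
  have hfinite : ∀ x (ε : ℝ), 0 < ε → {v : V | ε ≤ ‖ι x v‖}.Finite := fun x => (h2 (ι x)).2 ⟨x, rfl⟩
  have htend : ∀ c : ℕ → 𝕜, Tendsto c atTop (𝓝 0) ↔ ∀ ε : ℝ, 0 < ε → {n | ε ≤ ‖c n‖}.Finite := by
    intro c
    rw [← Nat.cofinite_eq_atTop, Metric.tendsto_nhds]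
    simp [Filter.eventually_cofinite]
  refine ⟨h1, hcoord, ?_, ?_, ?_, ?_, ?_, ?_, ?_⟩
  · intro x g hg
    rw [← h2]
    intro ε hε
    exact (hfinite x ε hε).subset fun v hv => le_trans hv (hg v)
  · intro x ε hε
    refine ⟨(hfinite x ε hε).toFinset, fun y hy1 hy2 => hle y ε hε.le fun v => ?_⟩
    by_cases hv : ε ≤ ‖ι x v‖
    · rw [hy1 v (by simpa using hv)]; simpa using hε.le
    · exact (hy2 v).trans (not_le.1 hv).le
  · intro v
    rw [← h2]
    intro ε hε
    refine (Set.finite_singleton v).subset fun u hu => ?_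
    by_contra hne
    have : u ≠ v := hne
    simp [Pi.single_eq_of_ne this] at hu
    linarith
  · intro ε hε
    obtain ⟨N0, hN0⟩ := exists_nat_gt (ε⁻¹)
    refine ⟨N0, fun A hA y hy1 hy2 => hle y ε hε.le fun v => ?_⟩
    by_cases hv : v ∈ A
    · rw [hy1 v hv, norm_inv, RCLike.norm_natCast]
      have : (N0 : ℝ) ≤ A.card := by exact_mod_cast hA
      exact inv_le_of_inv_le₀ hε (by linarith)
    · rw [hy2 v hv]; simpa using hε.le
  · intro x A hA
    rw [htend]
    intro ε hε
    have hex : ∀ n, ε ≤ ‖((A n).card : 𝕜)⁻¹ * ∑ u ∈ A n, ι x u‖ → ∃ u ∈ A n, ε ≤ ‖ι x u‖ := by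
      intro n hn
      by_contra! hcon
      rcases (A n).eq_empty_or_nonempty with h0 | h0
      · simp [h0] at hn; linarith
      · have hc : (0 : ℝ) < (A n).card := by exact_mod_cast h0.card_pos
        have : ‖∑ u ∈ A n, ι x u‖ < (A n).card * ε := by
          refine (norm_sum_le _ _).trans_lt ?_
          rw [← nsmul_eq_mul, ← Finset.sum_const]
          exact Finset.sum_lt_sum_of_nonempty h0 hcon
        rw [norm_mul, norm_inv, RCLike.norm_natCast, ← div_eq_inv_mul, le_div_iff₀ hc] at hn
        linarith
    refine ((hfinite x ε hε).biUnion (t := fun u => {n | u ∈ A n}) fun u _ =>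
      Set.Subsingleton.finite fun m hm n hn => hA u m n hm hn).subset ?_
    intro n hn
    obtain ⟨u, hu1, hu2⟩ := hex n hn
    exact Set.mem_biUnion (show u ∈ {v : V | ε ≤ ‖ι x v‖} from hu2) hu1
  · intro A c hA hne
    rw [← h2, htend]
    refine forall₂_congr fun ε hε => ?_
    constructor
    · intro hfin
      choose f hf using hne
      refine Set.Finite.of_finite_image (hfin.subset ?_) (f := f) ?_
      · rintro _ ⟨n, hn, rfl⟩
        simpa [blockFun_mem hA c (hf n)] using hn
      · intro m hm n hn hmn
        exact hA (f m) m n (hf m) (hmn ▸ hf n)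
    · intro hfin
      refine (hfin.biUnion (t := fun n => (A n : Set V)) fun n _ => (A n).finite_toSet).subset ?_
      intro u hu
      by_cases hex : ∃ n, u ∈ A n
      · obtain ⟨n, hn⟩ := hex
        simp only [Set.mem_ofPred_eq, blockFun_mem hA c hn] at hu
        exact Set.mem_biUnion hu hn
      · simp only [Set.mem_ofPred_eq, blockFun_not_mem c (not_exists.1 hex)] at hu
        simp at hu
        linarith
  · intro N N' c c' k q hk hq _ hc
    rw [← tendsto_add_atTop_iff_nat 1]
    simp_rw [hc]
    constructor
    · intro h
      have := h.const_mul q⁻¹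
      simpa [← mul_assoc, inv_mul_cancel₀ hq] using this
    · intro h
      simpa using h.const_mul q

theorem good_lp (ι : X →ₗ[𝕜] V → 𝕜) (p : ℝ) (hp : 1 < p)
    (h : IsLpSpaceRep ι (fun _ : V => (1 : 𝕜)) p) :
    Good ι (fun N c => Summable fun n => (N n : ℝ) * ‖c n‖ ^ p) := by
  obtain ⟨h1, h2, h3⟩ := h
  simp only [mul_one] at h2 h3
  have hp0 : 0 < p := by linarith
  have hpow : ∀ a : 𝕜, ((‖a‖₊ : ℝ≥0∞)) ^ p = ((‖a‖₊ ^ p : ℝ≥0) : ℝ≥0∞) := by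
    intro a
    rw [ENNReal.coe_rpow_of_nonneg _ hp0.le]
  have hmem : ∀ f : V → 𝕜, f ∈ Set.range ι ↔ Summable fun v => ‖f v‖ ^ p := by
    intro f
    rw [← h2]
    simp_rw [hpow]
    rw [lt_top_iff_ne_top, ENNReal.tsum_coe_ne_top_iff_summable, ← NNReal.summable_coe]
    simp
  have hnorm : ∀ x, ‖x‖ ^ p = ∑' v, ‖ι x v‖ ^ p := by
    intro x
    have hsx : Summable fun v => ‖ι x v‖ ^ p := (hmem _).1 ⟨x, rfl⟩
    have hsx' : Summable fun v => ‖ι x v‖₊ ^ p := by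
      rw [← NNReal.summable_coe]; simpa using hsx
    have h4 := h3 x
    simp_rw [hpow] at h4
    rw [← ENNReal.coe_tsum hsx', ← ENNReal.coe_rpow_of_nonneg _ (by positivity)] at h4
    have h5 : ‖x‖₊ = (∑' v, ‖ι x v‖₊ ^ p) ^ (1 / p) := by exact_mod_cast h4
    have h6 : ‖x‖₊ ^ p = ∑' v, ‖ι x v‖₊ ^ p := by
      rw [h5, ← NNReal.rpow_mul, one_div_mul_cancel hp0.ne', NNReal.rpow_one]
    have h7 := congrArg (fun t : ℝ≥0 => (t : ℝ)) h6
    simpa [NNReal.coe_tsum] using h7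
  have hsum : ∀ x, Summable fun v => ‖ι x v‖ ^ p := fun x => (hmem _).1 ⟨x, rfl⟩
  have hnn : ∀ (f : V → 𝕜) v, 0 ≤ ‖f v‖ ^ p := fun f v => by positivity
  refine ⟨h1, ?_, ?_, ?_, ?_, ?_, ?_, ?_, ?_⟩
  · intro x v
    rw [← Real.rpow_le_rpow_iff (norm_nonneg _) (norm_nonneg _) hp0, hnorm]
    exact (hsum x).le_tsum v fun u _ => hnn _ u
  · intro x g hg
    rw [hmem]
    exact (hsum x).of_nonneg_of_le (hnn g) fun v =>
      Real.rpow_le_rpow (norm_nonneg _) (hg v) hp0.le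
  · intro x ε hε
    have hεp : 0 < ε ^ p := by positivity
    obtain ⟨F, hF⟩ := (hsum x).tsum_vanishing (Metric.ball_mem_nhds (0 : ℝ) hεp)
    refine ⟨F, fun y hy1 hy2 => ?_⟩
    have hFc := hF ((F : Set V)ᶜ) disjoint_compl_left
    rw [← Real.rpow_le_rpow_iff (norm_nonneg _) hε.le hp0, hnorm]
    have e1 : ∑' v, ‖ι y v‖ ^ p = ∑' v : ↥((F : Set V)ᶜ), ‖ι y v‖ ^ p := by
      refine (tsum_subtype_eq_of_support_subset ?_).symm
      intro v hv hvF
      apply hv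
      simp [hy1 v hvF, hp0.ne']
    rw [e1]
    have e2 : ∑' v : ↥((F : Set V)ᶜ), ‖ι y v‖ ^ p ≤ ∑' v : ↥((F : Set V)ᶜ), ‖ι x v‖ ^ p :=
      ((hsum y).subtype _).tsum_le_tsum (fun v =>
        Real.rpow_le_rpow (norm_nonneg _) (hy2 v) hp0.le) ((hsum x).subtype _)
    rw [mem_ball_zero_iff] at hFc
    exact e2.trans ((le_abs_self _).trans hFc.le)
  · intro v
    rw [hmem]
    apply summable_of_ne_finset_zero (s := {v})
    intro u hu
    have : u ≠ v := by simpa using hu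
    simp [Pi.single_eq_of_ne this, hp0.ne']
  · intro ε hε
    have hεp : 0 < ε ^ p := by positivity
    have ht : Tendsto (fun n : ℕ => (n : ℝ) ^ (-(p - 1))) atTop (𝓝 0) :=
      (tendsto_rpow_neg_atTop (by linarith)).comp tendsto_natCast_atTop_atTop
    obtain ⟨N0, hN0⟩ := ((ht.eventually (gt_mem_nhds hεp)).and (eventually_ge_atTop 1)).exists_forall_of_atTop
    refine ⟨N0, fun A hA y hy1 hy2 => ?_⟩
    obtain ⟨h5, h6⟩ := hN0 _ hA
    rw [← Real.rpow_le_rpow_iff (norm_nonneg _) hε.le hp0, hnorm]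
    have hc : (0 : ℝ) < A.card := by exact_mod_cast h6
    rw [tsum_eq_sum (s := A) (fun v hv => by simp [hy2 v hv, hp0.ne'])]
    rw [Finset.sum_congr rfl (fun v hv => by rw [hy1 v hv])]
    rw [Finset.sum_const, nsmul_eq_mul, norm_inv, RCLike.norm_natCast]
    refine le_trans (le_of_eq ?_) h5.le
    rw [Real.inv_rpow hc.le, ← Real.rpow_neg hc.le]
    nth_rewrite 1 [← Real.rpow_one (A.card : ℝ)]
    rw [← Real.rpow_add hc]
    congr 1; ring
  · intro x A hA
    have hs1 : Summable fun s : (Σ n, ↥(A n)) => ‖ι x s.2‖ ^ p :=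
      (hsum x).comp_injective (block_inj hA)
    have hs2 := hs1.sigma
    simp only [tsum_fintype] at hs2
    refine hs2.of_nonneg_of_le (fun n => by positivity) fun n => ?_
    rw [Finset.sum_coe_sort (A n) (fun u => ‖ι x u‖ ^ p)]
    rcases (A n).eq_empty_or_nonempty with h0 | h0
    · simp [h0]
    have hc : (0 : ℝ) < (A n).card := by exact_mod_cast h0.card_pos
    have e1 : ‖∑ u ∈ A n, ι x u‖ ^ p ≤ ((A n).card : ℝ) ^ (p - 1) * ∑ u ∈ A n, ‖ι x u‖ ^ p := by
      refine (Real.rpow_le_rpow (norm_nonneg _) (norm_sum_le _ _) hp0.le).trans ?_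
      have := Real.rpow_sum_le_const_mul_sum_rpow (A n) (fun u => ‖ι x u‖) hp.le
      simpa using this
    rw [norm_mul, norm_inv, RCLike.norm_natCast, Real.mul_rpow (by positivity) (by positivity),
      Real.inv_rpow hc.le]
    have e2 : ((A n).card : ℝ) ^ p = ((A n).card : ℝ) ^ (p - 1) * (A n).card := by
      rw [← Real.rpow_add_one hc.ne']; congr 1; ring
    have hc' : 0 < ((A n).card : ℝ) ^ (p - 1) := by positivity
    rw [e2]
    calc _ = (((A n).card : ℝ) ^ (p - 1))⁻¹ * ‖∑ u ∈ A n, ι x u‖ ^ p := by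
          field_simp
      _ ≤ (((A n).card : ℝ) ^ (p - 1))⁻¹ *
          (((A n).card : ℝ) ^ (p - 1) * ∑ u ∈ A n, ‖ι x u‖ ^ p) := by gcongr
      _ = _ := by field_simp
  · intro A c hA hne
    rw [hmem, ← (block_inj hA).summable_iff, summable_sigma_of_nonneg]
    · have e : ∀ n (u : ↥(A n)), ‖blockFun A c (u : V)‖ ^ p = ‖c n‖ ^ p := by
        intro n u
        rw [blockFun_mem hA c u.2]
      simp only [Function.comp_def, tsum_fintype, e]
      rw [and_iff_right (fun n => (hasSum_fintype _).summable)]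
      simp
    · intro s; exact hnn _ _
    · intro u hu
      rw [blockFun_not_mem, norm_zero, Real.zero_rpow hp0.ne']
      intro n hn
      exact hu ⟨⟨n, u, hn⟩, rfl⟩
  · intro N N' c c' k q hk hq hN hc
    rw [← summable_nat_add_iff 1]
    have hq' : 0 < ‖q‖ ^ p := Real.rpow_pos_of_pos (norm_pos_iff.2 hq) _
    have hk' : (0 : ℝ) < k := by exact_mod_cast Nat.pos_of_ne_zero hk
    rw [← summable_mul_left_iff (a := (k : ℝ) * ‖q‖ ^ p) (f := fun n => (N' n : ℝ) * ‖c' n‖ ^ p)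
      (by positivity)]
    refine summable_congr fun n => ?_
    rw [hN, hc, norm_mul, Real.mul_rpow (norm_nonneg _) (norm_nonneg _)]
    push_cast
    ring

end GoodSpaces

section TreeLemmas

variable {V : Type*}

structure SymTree (par : V → Option V) (gen : V → ℤ) (γ : ℤ → ℕ) : Prop where
  tree : IsDirectedTree par
  leafless : Leafless par
  hgen : ∀ u v : V, par v = some u → gen v = gen u + 1
  fin : ∀ v : V, (children par v).Finite
  hγ : ∀ v : V, (children par v).ncard = γ (gen v)

noncomputable def chF (par : V → Option V) (v : V) : Finset V :=
  if h : (children par v).Finite then h.toFinset else ∅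

noncomputable def levF (par : V → Option V) (v : V) : ℕ → Finset V
  | 0 => {v}
  | n + 1 => (levF par v n).biUnion (chF par)

def Ga (γ : ℤ → ℕ) (m : ℤ) (n : ℕ) : ℕ := ∏ i ∈ Finset.range n, γ (m + i)

noncomputable def Lp {𝕜 : Type*} [RCLike 𝕜] (Λ : ℤ → 𝕜) (m : ℤ) (n : ℕ) : 𝕜 :=
  ∏ i ∈ Finset.range n, Λ (m + i + 1)

noncomputable def Hp {𝕜 : Type*} [RCLike 𝕜] (Λ : ℤ → 𝕜) (m : ℤ) (n : ℕ) : 𝕜 :=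
  ∏ i ∈ Finset.range n, Λ (m - i)

theorem parIter_add (par : V → Option V) (m n : ℕ) (v : V) :
    parIter par (m + n) v = (parIter par m v).bind (parIter par n) := by
  induction m generalizing v with
  | zero => simp [parIter]
  | succ m ih =>
    rw [Nat.succ_add]
    simp only [parIter]
    cases par v with
    | none => rfl
    | some w => simpa using ih w

theorem parIter_succ' (par : V → Option V) (n : ℕ) (v : V) :
    parIter par (n + 1) v = (parIter par n v).bind par := by
  rw [parIter_add]
  congr 1
  ext w : 1
  simp only [parIter]
  cases par w <;> rfl

theorem parIter_comp {par : V → Option V} {m n : ℕ} {u v w : V} (h1 : parIter par m u = some v)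
    (h2 : parIter par n v = some w) : parIter par (m + n) u = some w := by
  rw [parIter_add, h1]; exact h2

namespace SymTree

variable {par : V → Option V} {gen : V → ℤ} {γ : ℤ → ℕ} (hS : SymTree par gen γ)

include hS

theorem mem_chF {u v : V} : u ∈ chF par v ↔ par u = some v := by
  rw [chF, dif_pos (hS.fin v)]
  simp [children]

theorem coe_chF (v : V) : (chF par v : Set V) = children par v := by
  ext u
  simp [hS.mem_chF, children]

theorem card_chF (v : V) : (chF par v).card = γ (gen v) := by
  rw [← hS.hγ, ← hS.coe_chF, Set.ncard_coe_finset]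

theorem chF_nonempty (v : V) : (chF par v).Nonempty := by
  rw [← Finset.coe_nonempty, hS.coe_chF]
  exact Set.nonempty_iff_ne_empty.2 (hS.leafless v)

theorem gam_ne (v : V) : γ (gen v) ≠ 0 := by
  rw [← hS.card_chF]
  exact (hS.chF_nonempty v).card_ne_zero

theorem mem_levF {u v : V} {n : ℕ} : u ∈ levF par v n ↔ parIter par n u = some v := by
  induction n generalizing u with
  | zero => simp [levF, parIter]
  | succ n ih =>
    simp only [levF, parIter, Finset.mem_biUnion, hS.mem_chF, ih, Option.bind_eq_some_iff]
    constructor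
    · rintro ⟨a, b, c⟩; exact ⟨a, c, b⟩
    · rintro ⟨a, b, c⟩; exact ⟨a, c, b⟩

theorem gen_iter {u v : V} {n : ℕ} (h : parIter par n u = some v) : gen u = gen v + n := by
  induction n generalizing u with
  | zero => simp [parIter] at h; simp [h]
  | succ n ih =>
    simp only [parIter, Option.bind_eq_some_iff] at h
    obtain ⟨w, h1, h2⟩ := h
    rw [hS.hgen _ _ h1, ih h2]
    push_cast; ring

theorem lev_disj (v : V) : BlockDisj (levF par v) := by
  intro u m n hm hn
  have h1 := hS.gen_iter (hS.mem_levF.1 hm)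
  have h2 := hS.gen_iter (hS.mem_levF.1 hn)
  omega

theorem ch_disj (s : Set V) : s.PairwiseDisjoint (chF par) := by
  intro a _ b _ hab
  rw [Function.onFun, Finset.disjoint_left]
  intro u hu hu'
  rw [hS.mem_chF] at hu hu'
  exact hab (Option.some_injective _ (hu.symm.trans hu'))

theorem lev_nonempty (v : V) (n : ℕ) : (levF par v n).Nonempty := by
  induction n with
  | zero => simp [levF]
  | succ n ih =>
    obtain ⟨w, hw⟩ := ih
    obtain ⟨u, hu⟩ := hS.chF_nonempty w
    exact ⟨u, Finset.mem_biUnion.2 ⟨w, hw, hu⟩⟩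

theorem lev_sum {M : Type*} [AddCommMonoid M] (v : V) (n : ℕ) (f : V → M) :
    ∑ u ∈ levF par v (n + 1), f u = ∑ w ∈ levF par v n, ∑ u ∈ chF par w, f u := by
  rw [levF, Finset.sum_biUnion (hS.ch_disj _)]

theorem card_lev (v : V) (n : ℕ) : (levF par v n).card = Ga γ (gen v) n := by
  induction n with
  | zero => simp [levF, Ga]
  | succ n ih =>
    rw [levF, Finset.card_biUnion (hS.ch_disj _), Ga, Finset.prod_range_succ]
    rw [Finset.sum_congr rfl (g := fun _ => γ (gen v + n))]
    · rw [Finset.sum_const, ih, smul_eq_mul, Ga]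
    · intro w hw
      rw [hS.card_chF, hS.gen_iter (hS.mem_levF.1 hw)]

theorem Ga_ne (v : V) (n : ℕ) : Ga γ (gen v) n ≠ 0 := by
  rw [← hS.card_lev]
  exact (hS.lev_nonempty v n).card_ne_zero

theorem conn (P : ℤ → Prop) (h : ∀ u v, par u = some v → (P (gen u) ↔ P (gen v))) (u v : V) :
    P (gen u) ↔ P (gen v) := by
  have key : ∀ n u w, parIter par n u = some w → (P (gen u) ↔ P (gen w)) := by
    intro n
    induction n with
    | zero => intro u w hw; simp [parIter] at hw; rw [hw]
    | succ n ih =>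
      intro u w hw
      simp only [parIter, Option.bind_eq_some_iff] at hw
      obtain ⟨a, h1, h2⟩ := hw
      exact (h u a h1).trans (ih a w h2)
  obtain ⟨m, n, w, h1, h2⟩ := hS.tree.connected u v
  exact (key _ _ _ h1).trans (key _ _ _ h2).symm

theorem rooted_none (hr : Rooted par) (v : V) : ∃ n, parIter par n v = none := by
  obtain ⟨r, hr⟩ := hr
  obtain ⟨m, n, w, h1, h2⟩ := hS.tree.connected v r
  cases n with
  | zero =>
    simp [parIter] at h2
    subst h2
    refine ⟨m + 1, ?_⟩
    rw [parIter_succ', h1]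
    exact hr
  | succ n =>
    simp only [parIter] at h2
    rw [show par r = none from hr] at h2
    simp at h2

theorem big_level (hf : ¬ HasFreeLeftEnd par) (v : V) (M : ℕ) :
    ∃ k w, parIter par k v = some w ∧ M ≤ (levF par w k).card := by
  induction M with
  | zero => exact ⟨0, v, rfl, Nat.zero_le _⟩
  | succ M ih =>
    obtain ⟨k, w, h1, h2⟩ := ih
    simp only [HasFreeLeftEnd, not_exists, not_forall] at hf
    obtain ⟨n, hn, w', hw', hne⟩ := hf w
    refine ⟨k + n, w', parIter_comp h1 hw', ?_⟩
    have hγ2 : 2 ≤ γ (gen w') := by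
      have h0 := hS.gam_ne w'
      have h3 : γ (gen w') ≠ 1 := by
        intro h4
        rw [← hS.hγ, Set.ncard_eq_one] at h4
        obtain ⟨a, ha⟩ := h4
        apply hne
        rw [ha]
        simp
      omega
    have hk0 : (levF par w k).card ≠ 0 := (hS.lev_nonempty w k).card_ne_zero
    rw [hS.card_lev] at h2 hk0 ⊢
    obtain ⟨n, rfl⟩ : ∃ n', n = n' + 1 := ⟨n - 1, by omega⟩
    have e1 : Ga γ (gen w') (n + 1) ≠ 0 := hS.Ga_ne w' (n + 1)
    have e2 : 2 ≤ Ga γ (gen w') (n + 1) := by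
      rw [Ga, Finset.prod_range_succ'] at e1 ⊢
      simp only [Nat.cast_zero, add_zero] at e1 ⊢
      have := left_ne_zero_of_mul e1
      have : 1 ≤ ∏ k ∈ Finset.range n, γ (gen w' + ((k + 1 : ℕ) : ℤ)) := by omega
      nlinarith
    have e3 : Ga γ (gen w') (k + (n + 1)) = Ga γ (gen w') (n + 1) * Ga γ (gen w) k := by
      rw [add_comm k, Ga, Finset.prod_range_add, hS.gen_iter hw', Ga, Ga]
      congr 1
      refine Finset.prod_congr rfl fun i _ => ?_
      congr 1
      push_cast; ring
    rw [e3]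
    have : 1 ≤ Ga γ (gen w) k := by omega
    nlinarith

end SymTree

end TreeLemmas

section GoodLemmas

variable {𝕜 : Type*} [RCLike 𝕜] {V : Type*} {X : Type*} [NormedAddCommGroup X] [NormedSpace 𝕜 X]
  {ι : X →ₗ[𝕜] V → 𝕜} {C : (ℕ → ℕ) → (ℕ → 𝕜) → Prop}

theorem Good.solid2 (hG : Good ι C) (x y : X) (g : V → 𝕜)
    (h : ∀ v, ‖g v‖ ≤ ‖ι x v‖ ∨ ‖g v‖ ≤ ‖ι y v‖) : g ∈ Set.range ι := by
  obtain ⟨a, ha⟩ := hG.solid x (fun v => if ‖g v‖ ≤ ‖ι x v‖ then g v else 0) (fun v => by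
    split_ifs with h1
    · exact h1
    · simp)
  obtain ⟨b, hb⟩ := hG.solid y (fun v => if ‖g v‖ ≤ ‖ι x v‖ then 0 else g v) (fun v => by
    split_ifs with h1
    · simp
    · exact (h v).resolve_left h1)
  refine ⟨a + b, ?_⟩
  rw [map_add, ha, hb]
  ext v
  simp only [Pi.add_apply]
  split_ifs <;> simp

theorem Good.sumDisj [CompleteSpace X] (hG : Good ι C) (z : X) (s : ℕ → X)
    (h1 : ∀ n v, ι (s n) v ≠ 0 → ι (s n) v = ι z v)
    (h2 : ∀ v m n, ι (s m) v ≠ 0 → ι (s n) v ≠ 0 → m = n) : Summable s := by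
  rw [summable_iff_vanishing_norm]
  intro ε hε
  obtain ⟨F, hF⟩ := hG.tail z (ε / 2) (by positivity)
  have hfin : (⋃ v ∈ F, {n | ι (s n) v ≠ 0}).Finite :=
    F.finite_toSet.biUnion fun v _ => Set.Subsingleton.finite fun m hm n hn => h2 v m n hm hn
  refine ⟨hfin.toFinset, fun t ht => ?_⟩
  refine lt_of_le_of_lt (hF _ ?_ ?_) (by linarith)
  · intro v hv
    rw [map_sum, Finset.sum_apply]
    refine Finset.sum_eq_zero fun n hn => ?_
    by_contra hne
    refine Finset.disjoint_left.1 ht hn ?_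
    rw [Set.Finite.mem_toFinset]
    exact Set.mem_biUnion hv hne
  · intro v
    rw [map_sum, Finset.sum_apply]
    by_cases hex : ∃ n ∈ t, ι (s n) v ≠ 0
    · obtain ⟨n, hn, hne⟩ := hex
      rw [Finset.sum_eq_single_of_mem n hn, h1 n v hne]
      intro m _ hmn
      by_contra hm
      exact hmn (h2 v m n hm hne)
    · push Not at hex
      rw [Finset.sum_eq_zero hex]
      simp

theorem Good.dense_of (hG : Good ι C) (e : V → X) (he : ∀ v, ι (e v) = Pi.single v 1)
    (K : Submodule 𝕜 X) (hK : ∀ v, e v ∈ K.topologicalClosure) : Dense (K : Set X) := by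
  intro x
  rw [← Submodule.topologicalClosure_coe]
  have hcl : IsClosed (K.topologicalClosure : Set X) := K.isClosed_topologicalClosure
  rw [← hcl.closure_eq, Metric.mem_closure_iff]
  intro ε hε
  obtain ⟨F, hF⟩ := hG.tail x (ε / 2) (by positivity)
  have hval : ∀ v, ι (∑ u ∈ F, ι x u • e u) v = if v ∈ F then ι x v else 0 := by
    intro v
    rw [map_sum, Finset.sum_apply]
    simp [he, Pi.single_apply]
  refine ⟨∑ u ∈ F, ι x u • e u, ?_, ?_⟩
  · exact Submodule.sum_mem _ fun u _ => Submodule.smul_mem _ _ (hK u)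
  · rw [dist_eq_norm]
    refine lt_of_le_of_lt (hF _ ?_ ?_) (by linarith)
    · intro v hv
      rw [map_sub, Pi.sub_apply, hval, if_pos hv, sub_self]
    · intro v
      rw [map_sub, Pi.sub_apply, hval]
      split_ifs <;> simp

theorem Good.separable (hG : Good ι C) (hV : Countable V) (e : V → X)
    (he : ∀ v, ι (e v) = Pi.single v 1) : TopologicalSpace.SeparableSpace X := by
  have h1 : TopologicalSpace.IsSeparable (Set.range e) := (Set.countable_range e).isSeparable
  have h2 : TopologicalSpace.IsSeparable (Submodule.span 𝕜 (Set.range e) : Set X) := h1.span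
  have h3 := h2.closure
  have h4 := hG.dense_of e he (Submodule.span 𝕜 (Set.range e)) fun v =>
    Submodule.le_topologicalClosure _ (Submodule.subset_span ⟨v, rfl⟩)
  rw [h4.closure_eq] at h3
  exact TopologicalSpace.isSeparable_univ_iff.1 h3

def fwd (T : X →L[𝕜] X) : Submodule 𝕜 X where
  carrier := {x | Summable fun n : ℕ => (T ^ n) x}
  add_mem' := by
    intro a b ha hb
    have := Summable.add ha hb
    simpa using this
  zero_mem' := by simp [summable_zero]
  smul_mem' := by
    intro c x hx
    have := Summable.const_smul c hx
    refine this.congr fun n => ?_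
    rw [map_smul]

def bwd (T : X →L[𝕜] X) : Submodule 𝕜 X where
  carrier := {x | ∃ s : ℕ → X, s 0 = x ∧ (∀ n, T (s (n + 1)) = s n) ∧ Summable s}
  add_mem' := by
    rintro a b ⟨s, h1, h2, h3⟩ ⟨t, k1, k2, k3⟩
    exact ⟨fun n => s n + t n, by simp [h1, k1], fun n => by simp [h2, k2], h3.add k3⟩
  zero_mem' := ⟨fun _ => 0, rfl, fun n => by simp, summable_zero⟩
  smul_mem' := by
    rintro c a ⟨s, h1, h2, h3⟩
    exact ⟨fun n => c • s n, by simp [h1], fun n => by simp [h2], h3.const_smul c⟩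

end GoodLemmas

section Main

variable {𝕜 : Type*} [RCLike 𝕜] {V : Type*} {X : Type*} [NormedAddCommGroup X] [NormedSpace 𝕜 X]
  {ι : X →ₗ[𝕜] V → 𝕜} {C : (ℕ → ℕ) → (ℕ → 𝕜) → Prop}
  {par : V → Option V} {gen : V → ℤ} {γ : ℤ → ℕ} {Λ : ℤ → 𝕜} {lam : V → 𝕜} {T : X →L[𝕜] X}

/-- coefficients of the iterated right inverse -/
noncomputable def cG (γ : ℤ → ℕ) (Λ : ℤ → 𝕜) (m : ℤ) (n : ℕ) : 𝕜 :=
  ((Ga γ m n : 𝕜) * Lp Λ m n)⁻¹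

theorem cG_succ (m : ℤ) (n : ℕ) (h1 : γ (m + n) ≠ 0) (h2 : Λ (m + n + 1) ≠ 0) :
    (γ (m + n) : 𝕜) * (Λ (m + n + 1) * cG γ Λ m (n + 1)) = cG γ Λ m n := by
  have h1' : (γ (m + n) : 𝕜) ≠ 0 := by exact_mod_cast h1
  rw [cG, cG, Ga, Lp, Finset.prod_range_succ, Finset.prod_range_succ, ← Ga, ← Lp]
  push_cast
  rw [mul_inv, mul_inv, mul_inv, mul_inv]
  field_simp

theorem shift_apply (hS : SymTree par gen γ) (hlam : ∀ v, lam v = Λ (gen v))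
    (hT : IsShiftRep par lam ι T) (x : X) (v : V) :
    ι (T x) v = ∑ u ∈ chF par v, Λ (gen v + 1) * ι x u := by
  have h := hT x v
  rw [← hS.coe_chF] at h
  have h2 : ι (T x) v = ∑ u ∈ chF par v, lam u * ι x u := by
    refine h.unique ?_
    exact Finset.hasSum (chF par v) (fun u => lam u * ι x u)
  rw [h2]
  refine Finset.sum_congr rfl fun u hu => ?_
  rw [hlam, hS.hgen _ _ (hS.mem_chF.1 hu)]

theorem pow_apply (hS : SymTree par gen γ) (hlam : ∀ v, lam v = Λ (gen v))
    (hT : IsShiftRep par lam ι T) (n : ℕ) (x : X) (v : V) :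
    ι ((T ^ n) x) v = Lp Λ (gen v) n * ∑ u ∈ levF par v n, ι x u := by
  induction n generalizing x with
  | zero => simp [Lp, levF]
  | succ n ih =>
    rw [pow_succ, mul_apply_eq_comp, ih, hS.lev_sum, Lp, Lp, Finset.prod_range_succ, mul_assoc]
    congr 1
    rw [Finset.mul_sum]
    refine Finset.sum_congr rfl fun w hw => ?_
    rw [shift_apply hS hlam hT, Finset.mul_sum, hS.gen_iter (hS.mem_levF.1 hw)]

def condG (C : (ℕ → ℕ) → (ℕ → 𝕜) → Prop) (γ : ℤ → ℕ) (Λ : ℤ → 𝕜) (m : ℤ) : Prop :=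
  C (Ga γ m) (cG γ Λ m)

def condH (C : (ℕ → ℕ) → (ℕ → 𝕜) → Prop) (Λ : ℤ → 𝕜) (m : ℤ) : Prop :=
  C (fun _ => 1) (Hp Λ m)

theorem condG_all (hS : SymTree par gen γ) (hG : Good ι C) (hΛ : ∀ n, Λ n ≠ 0) (u v : V) :
    condG C γ Λ (gen u) ↔ condG C γ Λ (gen v) := by
  refine hS.conn (condG C γ Λ) (fun u v huv => ?_) u v
  have hne := hS.gam_ne v
  have hne' : (γ (gen v) : 𝕜) ≠ 0 := by exact_mod_cast hne
  have e1 : ∀ n, Ga γ (gen v) (n + 1) = γ (gen v) * Ga γ (gen u) n := by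
    intro n
    rw [Ga, Finset.prod_range_succ', Ga, mul_comm, hS.hgen _ _ huv]
    simp only [Nat.cast_zero, add_zero]
    congr 1
    refine Finset.prod_congr rfl fun i _ => ?_
    congr 1; push_cast; ring
  have e2 : ∀ n, Lp Λ (gen v) (n + 1) = Λ (gen u) * Lp Λ (gen u) n := by
    intro n
    rw [Lp, Finset.prod_range_succ', Lp, mul_comm, hS.hgen _ _ huv]
    simp only [Nat.cast_zero, add_zero]
    congr 1
    refine Finset.prod_congr rfl fun i _ => ?_
    congr 1; push_cast; ring
  refine (hG.shift _ _ _ _ (γ (gen v)) ((γ (gen v) * Λ (gen u))⁻¹) hne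
    (inv_ne_zero (mul_ne_zero hne' (hΛ _))) e1 ?_).symm
  intro n
  rw [cG, cG, e1, e2, ← mul_inv]
  push_cast
  congr 1; ring

theorem condH_all (hS : SymTree par gen γ) (hG : Good ι C) (hΛ : ∀ n, Λ n ≠ 0) (u v : V) :
    condH C Λ (gen u) ↔ condH C Λ (gen v) := by
  refine hS.conn (condH C Λ) (fun u v huv => ?_) u v
  refine hG.shift _ _ _ _ 1 (Λ (gen u)) one_ne_zero (hΛ _) (by simp) ?_
  intro n
  rw [Hp, Finset.prod_range_succ', Hp, mul_comm, hS.hgen _ _ huv]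
  simp only [Nat.cast_zero, sub_zero]
  congr 1
  refine Finset.prod_congr rfl fun i _ => ?_
  congr 1; push_cast; ring

theorem pow_single (hS : SymTree par gen γ) (hlam : ∀ v, lam v = Λ (gen v))
    (hT : IsShiftRep par lam ι T) (n : ℕ) (x : X) (v : V) (hx : ι x = Pi.single v 1) (w : V) :
    ι ((T ^ n) x) w = if parIter par n v = some w then Hp Λ (gen v) n else 0 := by
  rw [pow_apply hS hlam hT, hx, Finset.sum_pi_single']
  simp only [hS.mem_levF]
  split_ifs with h
  · rw [mul_one, hS.gen_iter h, Lp, Hp, ← Finset.prod_range_reflect]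
    refine Finset.prod_congr rfl fun i hi => ?_
    have : i < n := Finset.mem_range.1 hi
    congr 1
    omega
  · simp

theorem mem_bwd [CompleteSpace X] (hS : SymTree par gen γ) (hG : Good ι C) (hΛ : ∀ n, Λ n ≠ 0)
    (hlam : ∀ v, lam v = Λ (gen v)) (hT : IsShiftRep par lam ι T) (v : V)
    (hc : condG C γ Λ (gen v)) (x : X) (hx : ι x = Pi.single v 1) : x ∈ bwd T := by
  have hdisj := hS.lev_disj v
  obtain ⟨z, hz⟩ := (hG.blk (levF par v) (cG γ Λ (gen v)) hdisj (hS.lev_nonempty v)).2 (by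
    simp only [hS.card_lev]; exact hc)
  have hex : ∀ n, ∃ y, ι y = fun u => if u ∈ levF par v n then cG γ Λ (gen v) n else 0 := by
    intro n
    refine hG.solid z _ fun u => ?_
    split_ifs with h
    · rw [hz, blockFun_mem hdisj _ h]
    · simp
  choose s hs using hex
  refine ⟨s, ?_, ?_, ?_⟩
  · apply hG.inj
    rw [hs, hx]
    ext u
    simp [levF, cG, Ga, Lp, Pi.single_apply]
  · intro n
    apply hG.inj
    ext w
    rw [shift_apply hS hlam hT, hs, hs]
    beta_reduce
    by_cases hw : w ∈ levF par v n
    · have hg := hS.gen_iter (hS.mem_levF.1 hw)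
      rw [if_pos hw, ← cG_succ _ n (by rw [← hg]; exact hS.gam_ne w) (hΛ _)]
      rw [Finset.sum_congr rfl (g := fun _ => Λ (gen w + 1) * cG γ Λ (gen v) (n + 1))]
      · rw [Finset.sum_const, hS.card_chF, nsmul_eq_mul, hg]
      · intro u hu
        rw [if_pos]
        exact Finset.mem_biUnion.2 ⟨w, hw, hu⟩
    · rw [if_neg hw]
      refine Finset.sum_eq_zero fun u hu => ?_
      rw [if_neg, mul_zero]
      intro h
      obtain ⟨w', hw', hu'⟩ := Finset.mem_biUnion.1 h
      rw [hS.mem_chF] at hu hu'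
      rw [hu] at hu'
      exact hw (Option.some_injective _ hu' ▸ hw')
  · refine hG.sumDisj z s ?_ ?_
    · intro n u hne
      rw [hs] at hne ⊢
      beta_reduce at hne ⊢
      have : u ∈ levF par v n := by
        by_contra h; simp [h] at hne
      rw [if_pos this, hz, blockFun_mem hdisj _ this]
    · intro u m n hm hn
      rw [hs] at hm hn
      refine hdisj u m n ?_ ?_
      · by_contra h; simp [h] at hm
      · by_contra h; simp [h] at hn

theorem chaos_of_fwd [CompleteSpace X] (hS : SymTree par gen γ) (hG : Good ι C)
    (hΛ : ∀ n, Λ n ≠ 0)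
    (hlam : ∀ v, lam v = Λ (gen v)) (hT : IsShiftRep par lam ι T)
    (hc : ∀ v, condG C γ Λ (gen v)) (e : V → X) (he : ∀ v, ι (e v) = Pi.single v 1)
    (h : ∀ v, e v ∈ (bwd T ⊓ fwd T).topologicalClosure) : ChaoticOp T := by
  have := hG.separable hS.tree.countable e he
  refine chaos_criterion T _ (hG.dense_of e he _ h) ?_ ?_
  · intro x hx
    exact hx.1
  · intro x hx
    exact hx.2

theorem fwd_of_zero (x : X) (k : ℕ) (h : (T ^ k) x = 0) : x ∈ fwd T := by
  refine summable_of_ne_finset_zero (s := Finset.range k) fun n hn => ?_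
  have : k ≤ n := by simpa using hn
  obtain ⟨m, rfl⟩ := Nat.exists_eq_add_of_le' this
  rw [pow_add, mul_apply_eq_comp, h, map_zero]

theorem suff_a [CompleteSpace X] (hS : SymTree par gen γ) (hG : Good ι C) (hΛ : ∀ n, Λ n ≠ 0)
    (hlam : ∀ v, lam v = Λ (gen v)) (hT : IsShiftRep par lam ι T)
    (hc : ∀ v, condG C γ Λ (gen v))
    (hcase : Rooted par ∨ (Unrooted par ∧ ¬ HasFreeLeftEnd par)) : ChaoticOp T := by
  choose e he using hG.single
  have hb : ∀ v, e v ∈ bwd T := fun v => mem_bwd hS hG hΛ hlam hT v (hc v) _ (he v)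
  refine chaos_of_fwd hS hG hΛ hlam hT hc e he fun v => ?_
  rcases hcase with hr | ⟨-, hf⟩
  · apply Submodule.le_topologicalClosure
    refine ⟨hb v, ?_⟩
    obtain ⟨n, hn⟩ := hS.rooted_none hr v
    apply fwd_of_zero _ n
    apply hG.inj
    ext w
    rw [pow_single hS hlam hT n _ v (he v), hn]
    simp
  · rw [← SetLike.mem_coe, Submodule.topologicalClosure_coe, Metric.mem_closure_iff]
    intro ε hε
    obtain ⟨N0, hN0⟩ := hG.flat (ε / 2) (by positivity)
    obtain ⟨k, w, hk, hN⟩ := hS.big_level hf v N0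
    set A := levF par w k with hA
    have hc0 : (A.card : 𝕜) ≠ 0 := by exact_mod_cast (hS.lev_nonempty w k).card_ne_zero
    set y := (A.card : 𝕜)⁻¹ • ∑ u ∈ A, e u with hy
    have hval : ∀ u, ι y u = if u ∈ A then (A.card : 𝕜)⁻¹ else 0 := by
      intro u
      rw [hy, map_smul, map_sum, Pi.smul_apply, Finset.sum_apply]
      simp [he, Pi.single_apply]
    have hy' := hN0 A hN y (fun u hu => by rw [hval, if_pos hu]) (fun u hu => by rw [hval, if_neg hu])
    refine ⟨e v - y, ⟨?_, ?_⟩, ?_⟩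
    · exact Submodule.sub_mem _ (hb v)
        (Submodule.smul_mem _ _ (Submodule.sum_mem _ fun u _ => hb u))
    · apply fwd_of_zero _ k
      apply hG.inj
      ext w'
      rw [pow_apply hS hlam hT]
      simp only [map_sub, Pi.sub_apply, Finset.sum_sub_distrib, hval, he, Finset.sum_pi_single',
        map_zero, Pi.zero_apply]
      by_cases hw : w' = w
      · subst hw
        rw [if_pos (hS.mem_levF.2 hk), Finset.sum_congr rfl (g := fun _ => (A.card : 𝕜)⁻¹)
          (fun u hu => if_pos hu), Finset.sum_const, nsmul_eq_mul, mul_inv_cancel₀ hc0]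
        simp
      · rw [if_neg, Finset.sum_eq_zero]
        · simp
        · intro u hu
          rw [if_neg]
          intro hu'
          rw [hA] at hu'
          rw [hS.mem_levF] at hu hu'
          exact hw (Option.some_injective _ (hu.symm.trans hu'))
        · intro hu
          rw [hS.mem_levF] at hu
          exact hw (Option.some_injective _ (hu.symm.trans hk))
    · rw [dist_eq_norm, sub_sub_cancel]
      linarith

/-- blocks of ancestors -/
noncomputable def ancF (par : V → Option V) (v : V) (n : ℕ) : Finset V := (parIter par n v).toFinset

theorem mem_ancF {v w : V} {n : ℕ} : w ∈ ancF par v n ↔ parIter par n v = some w := by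
  simp [ancF]

theorem anc_disj (hS : SymTree par gen γ) (v : V) : BlockDisj (ancF par v) := by
  intro u m n hm hn
  have h1 := hS.gen_iter (mem_ancF.1 hm)
  have h2 := hS.gen_iter (mem_ancF.1 hn)
  omega

theorem anc_ex (hu : Unrooted par) (v : V) (n : ℕ) : ∃ w, parIter par n v = some w := by
  induction n with
  | zero => exact ⟨v, rfl⟩
  | succ n ih =>
    obtain ⟨w, hw⟩ := ih
    rw [parIter_succ', hw]
    exact Option.ne_none_iff_exists'.1 (hu w)

theorem blk_anc (hS : SymTree par gen γ) (hG : Good ι C) (hu : Unrooted par) (v : V)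
    (c : ℕ → 𝕜) : blockFun (ancF par v) c ∈ Set.range ι ↔ C (fun _ => 1) c := by
  rw [hG.blk _ _ (anc_disj hS v)]
  · have : (fun n => (ancF par v n).card) = fun _ => 1 := by
      ext n
      obtain ⟨w, hw⟩ := anc_ex hu v n
      simp [ancF, hw]
    rw [this]
  · intro n
    obtain ⟨w, hw⟩ := anc_ex hu v n
    exact ⟨w, mem_ancF.2 hw⟩

theorem suff_b [CompleteSpace X] (hS : SymTree par gen γ) (hG : Good ι C) (hΛ : ∀ n, Λ n ≠ 0)
    (hlam : ∀ v, lam v = Λ (gen v)) (hT : IsShiftRep par lam ι T)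
    (hc : ∀ v, condG C γ Λ (gen v)) (hu : Unrooted par)
    (hc' : ∀ v, condH C Λ (gen v)) : ChaoticOp T := by
  choose e he using hG.single
  have hb : ∀ v, e v ∈ bwd T := fun v => mem_bwd hS hG hΛ hlam hT v (hc v) _ (he v)
  refine chaos_of_fwd hS hG hΛ hlam hT hc e he fun v => ?_
  apply Submodule.le_topologicalClosure
  refine ⟨hb v, ?_⟩
  obtain ⟨z, hz⟩ := (blk_anc hS hG hu v (Hp Λ (gen v))).2 (hc' v)
  refine hG.sumDisj z _ ?_ ?_
  · intro n w hne
    rw [pow_single hS hlam hT n _ v (he v)] at hne ⊢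
    have h : parIter par n v = some w := by
      by_contra h; simp [h] at hne
    rw [if_pos h, hz, blockFun_mem (anc_disj hS v) _ (mem_ancF.2 h)]
  · intro w m n hm hn
    rw [pow_single hS hlam hT _ _ v (he v)] at hm hn
    refine anc_disj hS v w m n ?_ ?_
    · by_contra h; rw [mem_ancF] at h; simp [h] at hm
    · by_contra h; rw [mem_ancF] at h; simp [h] at hn

theorem exists_per (hG : Good ι C) (hch : ChaoticOp T) (v : V) :
    ∃ x N, 1 ≤ N ∧ (∀ j : ℕ, (T ^ (N * j)) x = x) ∧ ι x v ≠ 0 := by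
  obtain ⟨e, he⟩ := hG.single v
  obtain ⟨x, hd, N, hN, hx⟩ := Metric.dense_iff.1 hch.2 e 1 one_pos
  refine ⟨x, N, hN, ?_, ?_⟩
  · intro j
    induction j with
    | zero => simp
    | succ j ih => rw [Nat.mul_succ, pow_add, mul_apply_eq_comp, hx, ih]
  · intro h0
    have := hG.coord (x - e) v
    rw [map_sub, Pi.sub_apply, h0, he] at this
    rw [Metric.mem_ball, dist_eq_norm] at hd
    simp at this
    linarith

theorem nec_a (hS : SymTree par gen γ) (hG : Good ι C) (hΛ : ∀ n, Λ n ≠ 0)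
    (hlam : ∀ v, lam v = Λ (gen v)) (hT : IsShiftRep par lam ι T)
    (hch : ChaoticOp T) (v : V) : condG C γ Λ (gen v) := by
  have hdisj := hS.lev_disj v
  set c := cG γ Λ (gen v) with hcdef
  let R : (ℕ → Prop) → Prop := fun P =>
    blockFun (levF par v) (fun n => if P n then c n else 0) ∈ Set.range ι
  obtain ⟨x, N, hN, hx, hxv⟩ := exists_per hG hch v
  have hL : ∀ m n, Lp Λ m n ≠ 0 := fun m n => Finset.prod_ne_zero_iff.2 fun i _ => hΛ _
  have h0 : R (fun n => N ∣ n) := by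
    obtain ⟨y, hy⟩ := (hG.blk _ _ hdisj (hS.lev_nonempty v)).2 (hG.avg x _ hdisj)
    refine hG.solid ((ι x v)⁻¹ • y) _ fun u => ?_
    by_cases hu : ∃ n, u ∈ levF par v n
    · obtain ⟨n, hn⟩ := hu
      rw [blockFun_mem hdisj _ hn, map_smul, Pi.smul_apply, hy, blockFun_mem hdisj _ hn]
      split_ifs with hd
      · obtain ⟨j, rfl⟩ := hd
        have e1 := pow_apply hS hlam hT (N * j) x v
        rw [hx] at e1
        apply le_of_eq
        congr 1
        rw [smul_eq_mul, hcdef, cG, hS.card_lev]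
        have hc0 : (Ga γ (gen v) (N * j) : 𝕜) ≠ 0 := by exact_mod_cast hS.Ga_ne v _
        have hl := hL (gen v) (N * j)
        generalize (∑ u ∈ levF par v (N * j), ι x u) = S at *
        have hS0 : S ≠ 0 := by
          rintro rfl; simp at e1; exact hxv e1
        rw [e1]
        field_simp
      · rw [norm_zero]; positivity
    · rw [blockFun_not_mem _ (not_exists.1 hu), norm_zero]
      positivity
  have hstep : ∀ P, R P → R (fun n => P n ∨ P (n + 1)) := by
    rintro P ⟨y, hy⟩
    refine hG.solid2 y (T y) _ fun w => ?_
    by_cases hu : ∃ n, w ∈ levF par v n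
    · obtain ⟨n, hn⟩ := hu
      rw [blockFun_mem hdisj _ hn, hy, blockFun_mem hdisj _ hn]
      by_cases h1 : P n
      · left; simp [h1]
      by_cases h2 : P (n + 1)
      · right
        rw [if_pos (Or.inr h2), shift_apply hS hlam hT, hy]
        have hg := hS.gen_iter (hS.mem_levF.1 hn)
        rw [Finset.sum_congr rfl (g := fun _ => Λ (gen w + 1) * c (n + 1))]
        · rw [Finset.sum_const, hS.card_chF, nsmul_eq_mul, hg, hcdef,
            cG_succ _ _ (by rw [← hg]; exact hS.gam_ne w) (hΛ _)]
        · intro u hu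
          have hu' : u ∈ levF par v (n + 1) := Finset.mem_biUnion.2 ⟨w, hn, hu⟩
          rw [blockFun_mem hdisj _ hu', if_pos h2]
      · left; simp [h1, h2]
    · left
      rw [blockFun_not_mem _ (not_exists.1 hu)]
      simp
  have hk : ∀ k, R (fun n => ∃ i ≤ k, N ∣ n + i) := by
    intro k
    induction k with
    | zero => simpa using h0
    | succ k ih =>
      convert hstep _ ih using 2 with n
      constructor
      · rintro ⟨i, hi, hd⟩
        rcases Nat.lt_or_ge k i with h | h
        · obtain rfl : i = k + 1 := by omega
          exact Or.inr ⟨k, le_rfl, by rwa [add_assoc, add_comm 1]⟩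
        · exact Or.inl ⟨i, h, hd⟩
      · rintro (⟨i, hi, hd⟩ | ⟨i, hi, hd⟩)
        · exact ⟨i, by omega, hd⟩
        · exact ⟨i + 1, by omega, by rwa [add_comm i, ← add_assoc]⟩
  have hfin := hk N
  have htrue : (fun n => if ∃ i ≤ N, N ∣ n + i then c n else 0) = c := by
    ext n
    rw [if_pos]
    refine ⟨N - n % N, Nat.sub_le _ _, ?_⟩
    have h1 := Nat.mod_lt n hN
    refine ⟨n / N + 1, ?_⟩
    have := Nat.div_add_mod n N
    rw [mul_add, mul_one]
    omega
  have hfin' : blockFun (levF par v) c ∈ Set.range ι := by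
    rw [← htrue]; convert hfin
  rw [hG.blk _ _ hdisj (hS.lev_nonempty v)] at hfin'
  simp only [hS.card_lev] at hfin'
  exact hfin'

theorem nec_b (hS : SymTree par gen γ) (hG : Good ι C) (hΛ : ∀ n, Λ n ≠ 0)
    (hlam : ∀ v, lam v = Λ (gen v)) (hT : IsShiftRep par lam ι T)
    (hch : ChaoticOp T) (hun : Unrooted par) (v : V)
    (hv : ∀ n : ℕ, 1 ≤ n → ∀ w : V, parIter par n v = some w → ∃! u : V, u ∈ children par w) :
    condH C Λ (gen v) := by
  have hdisj := anc_disj hS v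
  set c := Hp Λ (gen v) with hcdef
  let R : (ℕ → Prop) → Prop := fun P =>
    blockFun (ancF par v) (fun n => if P n then c n else 0) ∈ Set.range ι
  obtain ⟨x, N, hN, hx, hxv⟩ := exists_per hG hch v
  have hch1 : ∀ n w w', parIter par n v = some w → par w = some w' → chF par w' = {w} := by
    intro n w w' h1 h2
    have h3 : parIter par (n + 1) v = some w' := by rw [parIter_succ', h1]; exact h2
    obtain ⟨u, hu1, hu2⟩ := hv (n + 1) (by omega) w' h3
    ext a
    rw [hS.mem_chF, Finset.mem_singleton]
    constructor
    · intro ha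
      rw [hu2 a ha, hu2 w h2]
    · rintro rfl; exact h2
  have hTn : ∀ n w, parIter par n v = some w → ∀ y, ι ((T ^ n) y) w = c n * ι y v := by
    intro n
    induction n with
    | zero =>
      intro w hw y
      simp [parIter] at hw
      simp [hcdef, Hp, hw]
    | succ n ih =>
      intro w' hw' y
      have hw2 := hw'
      rw [parIter_succ', Option.bind_eq_some_iff] at hw2
      obtain ⟨w, h1, h2⟩ := hw2
      rw [pow_succ', mul_apply_eq_comp, shift_apply hS hlam hT, hch1 n w w' h1 h2,
        Finset.sum_singleton, ih w h1, hcdef, Hp, Hp, Finset.prod_range_succ, ← hS.hgen _ _ h2,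
        hS.gen_iter h1]
      rw [add_sub_cancel_right]
      ring
  have h0 : R (fun n => N ∣ n) := by
    refine hG.solid ((ι x v)⁻¹ • x) _ fun u => ?_
    by_cases hu : ∃ n, u ∈ ancF par v n
    · obtain ⟨n, hn⟩ := hu
      rw [blockFun_mem hdisj _ hn, map_smul, Pi.smul_apply]
      split_ifs with hd
      · obtain ⟨j, rfl⟩ := hd
        have e1 := hTn (N * j) u (mem_ancF.1 hn) x
        rw [hx] at e1
        rw [e1, smul_eq_mul, mul_left_comm, inv_mul_cancel₀ hxv, mul_one]
      · rw [norm_zero]; positivity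
    · rw [blockFun_not_mem _ (not_exists.1 hu), norm_zero]
      positivity
  have hstep : ∀ P, R P → R (fun n => P n ∨ ∃ m, n = m + 1 ∧ P m) := by
    rintro P ⟨y, hy⟩
    refine hG.solid2 y (T y) _ fun w' => ?_
    by_cases hu : ∃ n, w' ∈ ancF par v n
    · obtain ⟨n, hn⟩ := hu
      rw [blockFun_mem hdisj _ hn, hy, blockFun_mem hdisj _ hn]
      by_cases h1 : P n
      · left; simp [h1]
      by_cases h2 : ∃ m, n = m + 1 ∧ P m
      · right
        rw [if_pos (Or.inr h2)]
        obtain ⟨m, rfl, hm⟩ := h2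
        have hw2 := mem_ancF.1 hn
        rw [parIter_succ', Option.bind_eq_some_iff] at hw2
        obtain ⟨w, k1, k2⟩ := hw2
        rw [shift_apply hS hlam hT, hch1 m w w' k1 k2,
          Finset.sum_singleton, hy, blockFun_mem hdisj _ (mem_ancF.2 k1), if_pos hm, hcdef, Hp, Hp,
          Finset.prod_range_succ, ← hS.hgen _ _ k2, hS.gen_iter k1, add_sub_cancel_right, mul_comm]
      · left; simp [h1, h2]
    · left
      rw [blockFun_not_mem _ (not_exists.1 hu)]
      simp
  have hk : ∀ k, R (fun n => ∃ i ≤ k, ∃ m, n = m + i ∧ N ∣ m) := by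
    intro k
    induction k with
    | zero => simpa using h0
    | succ k ih =>
      convert hstep _ ih using 2 with n
      constructor
      · rintro ⟨i, hi, m, hm, hd⟩
        rcases Nat.lt_or_ge k i with h | h
        · obtain rfl : i = k + 1 := by omega
          exact Or.inr ⟨m + k, by omega, k, le_rfl, m, rfl, hd⟩
        · exact Or.inl ⟨i, h, m, hm, hd⟩
      · rintro (⟨i, hi, m, hm, hd⟩ | ⟨m', hm', i, hi, m, hm, hd⟩)
        · exact ⟨i, by omega, m, hm, hd⟩
        · exact ⟨i + 1, by omega, m, by omega, hd⟩
  have hfin := hk N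
  have htrue : (fun n => if ∃ i ≤ N, ∃ m, n = m + i ∧ N ∣ m then c n else 0) = c := by
    ext n
    rw [if_pos]
    exact ⟨n % N, (Nat.mod_lt n hN).le, N * (n / N), (Nat.div_add_mod n N).symm, dvd_mul_right _ _⟩
  have hfin' : blockFun (ancF par v) c ∈ Set.range ι := by
    rw [← htrue]; convert hfin
  rwa [blk_anc hS hG hun] at hfin'

theorem main_abs [CompleteSpace X] (hS : SymTree par gen γ) (hG : Good ι C) (hΛ : ∀ n, Λ n ≠ 0)
    (hlam : ∀ v, lam v = Λ (gen v)) (hT : IsShiftRep par lam ι T)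
    (hgen0 : ∃ v₀ : V, gen v₀ = 0) :
    ((Rooted par ∨ (Unrooted par ∧ ¬ HasFreeLeftEnd par)) →
        (ChaoticOp T ↔ condG C γ Λ 0)) ∧
      ((Unrooted par ∧ HasFreeLeftEnd par) →
        (ChaoticOp T ↔ (condG C γ Λ 0 ∧ condH C Λ 0))) := by
  obtain ⟨v₀, hv₀⟩ := hgen0
  rw [← hv₀]
  refine ⟨fun hcase => ⟨fun h => nec_a hS hG hΛ hlam hT h v₀, fun h => ?_⟩, ?_⟩
  · exact suff_a hS hG hΛ hlam hT (fun v => (condG_all hS hG hΛ v v₀).2 h) hcase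
  · rintro ⟨hu, v, hv⟩
    constructor
    · intro h
      exact ⟨nec_a hS hG hΛ hlam hT h v₀,
        (condH_all hS hG hΛ v v₀).1 (nec_b hS hG hΛ hlam hT h hu v hv)⟩
    · rintro ⟨h1, h2⟩
      exact suff_b hS hG hΛ hlam hT (fun v => (condG_all hS hG hΛ v v₀).2 h1) hu
        (fun v => (condH_all hS hG hΛ v v₀).2 h2)

end Main

section Conv

variable {𝕜 : Type*} [RCLike 𝕜]

theorem gamProd_eq (γ : ℤ → ℕ) (n : ℕ) : gamProd γ n = ((Ga γ 0 n : ℝ≥0) : ℝ≥0∞) := by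
  simp [gamProd, Ga]

theorem lamProdPos_eq (Λ : ℤ → 𝕜) (n : ℕ) : lamProdPos Λ n = (‖Lp Λ 0 n‖₊ : ℝ≥0∞) := by
  simp [lamProdPos, Lp, nnnorm_prod]

theorem lamProdNeg_eq (Λ : ℤ → 𝕜) (n : ℕ) : lamProdNeg Λ n = (‖Hp Λ 0 n‖₊ : ℝ≥0∞) := by
  simp [lamProdNeg, Hp, nnnorm_prod]

theorem conv_tsum (a : ℕ → ℝ≥0) :
    (∑' n : ℕ, ((a (n + 1) : ℝ≥0) : ℝ≥0∞)) < ⊤ ↔ Summable fun n => (a n : ℝ) := by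
  rw [lt_top_iff_ne_top, ENNReal.tsum_coe_ne_top_iff_summable, NNReal.summable_coe]
  exact NNReal.summable_nat_add_iff 1

theorem conv_G_lp (γ : ℤ → ℕ) (Λ : ℤ → 𝕜) (p : ℝ) (hp : 1 < p)
    (hg : ∀ n, Ga γ 0 n ≠ 0) (hL : ∀ n, Lp Λ 0 n ≠ 0) :
    (∑' n : ℕ, (gamProd γ (n + 1) ^ (p / conjExp p) * lamProdPos Λ (n + 1) ^ p)⁻¹) < ⊤ ↔
    Summable fun n => (Ga γ 0 n : ℝ) * ‖cG γ Λ 0 n‖ ^ p := by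
  have hp1 : p / conjExp p = p - 1 := by
    rw [conjExp, div_div_cancel₀ (by linarith)]
  have e : ∀ n, (gamProd γ n ^ (p / conjExp p) * lamProdPos Λ n ^ p)⁻¹
      = (((Ga γ 0 n : ℝ≥0) * ‖cG γ Λ 0 n‖₊ ^ p : ℝ≥0) : ℝ≥0∞) := by
    intro n
    have h1 : (Ga γ 0 n : ℝ≥0) ≠ 0 := by exact_mod_cast hg n
    have h2 : ‖Lp Λ 0 n‖₊ ≠ 0 := by simpa using hL n
    rw [hp1, gamProd_eq, lamProdPos_eq, ← ENNReal.coe_rpow_of_ne_zero h1,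
      ← ENNReal.coe_rpow_of_ne_zero h2, ← ENNReal.coe_mul, ← ENNReal.coe_inv]
    · congr 1
      rw [cG, nnnorm_inv, nnnorm_mul, NNReal.inv_rpow, NNReal.mul_rpow, RCLike.nnnorm_natCast]
      have h3 : (Ga γ 0 n : ℝ≥0) ^ p = (Ga γ 0 n : ℝ≥0) ^ (p - 1) * (Ga γ 0 n : ℝ≥0) := by
        rw [← NNReal.rpow_add_one h1]; congr 1; ring
      rw [h3]
      have h4 : (Ga γ 0 n : ℝ≥0) ^ (p - 1) ≠ 0 := by
        simp [NNReal.rpow_eq_zero_iff, h1]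
      have h5 : ‖Lp Λ 0 n‖₊ ^ p ≠ 0 := by
        simp [NNReal.rpow_eq_zero_iff, hL n]
      field_simp
    · refine mul_ne_zero ?_ ?_
      · simp [NNReal.rpow_eq_zero_iff, h1]
      · simp [NNReal.rpow_eq_zero_iff, hL n]
  simp_rw [e]
  rw [conv_tsum (fun n => (Ga γ 0 n : ℝ≥0) * ‖cG γ Λ 0 n‖₊ ^ p)]
  simp

theorem conv_H_lp (Λ : ℤ → 𝕜) (p : ℝ) (hp : 1 < p) :
    (∑' n : ℕ, lamProdNeg Λ (n + 1) ^ p) < ⊤ ↔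
    Summable fun n => ((1 : ℕ) : ℝ) * ‖Hp Λ 0 n‖ ^ p := by
  simp_rw [lamProdNeg_eq, ← ENNReal.coe_rpow_of_nonneg _ (show 0 ≤ p by linarith)]
  rw [conv_tsum (fun n => ‖Hp Λ 0 n‖₊ ^ p)]
  simp

theorem conv_H_c0 (f : ℕ → 𝕜) :
    Tendsto (fun n : ℕ => (‖f n‖₊ : ℝ≥0∞)) atTop (𝓝 0) ↔ Tendsto f atTop (𝓝 0) := by
  rw [← ENNReal.coe_zero, ENNReal.tendsto_coe, ← NNReal.tendsto_coe,
    tendsto_zero_iff_norm_tendsto_zero (f := f)]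
  simp

theorem conv_G_c0 (γ : ℤ → ℕ) (Λ : ℤ → 𝕜)
    (hg : ∀ n, Ga γ 0 n ≠ 0) (hL : ∀ n, Lp Λ 0 n ≠ 0) :
    Tendsto (fun n : ℕ => gamProd γ n * lamProdPos Λ n) atTop (𝓝 ⊤) ↔
    Tendsto (cG γ Λ 0) atTop (𝓝 0) := by
  rw [← conv_H_c0, ← ENNReal.tendsto_inv_iff, ENNReal.inv_top]
  refine tendsto_congr fun n => ?_
  have h1 : (Ga γ 0 n : ℝ≥0) ≠ 0 := by exact_mod_cast hg n
  have h2 : ‖Lp Λ 0 n‖₊ ≠ 0 := by simpa using hL n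
  rw [gamProd_eq, lamProdPos_eq, ← ENNReal.coe_mul, ← ENNReal.coe_inv (mul_ne_zero h1 h2), cG,
    nnnorm_inv, nnnorm_mul, RCLike.nnnorm_natCast]

end Conv

/-- Theorem 9.1 / `t-symsym`: characterization of chaos for symmetric
weighted backward shifts on leafless symmetric trees, on `X = ℓ^p(V)` (`1 < p < ∞`) and on
`X = c₀(V)`; part (a) for rooted trees or unrooted trees without a free left end, part (b)
for unrooted trees with a free left end. -/
theorem statement16
    {𝕜 : Type*} [RCLike 𝕜] {V : Type*} (par : V → Option V) (hTree : IsDirectedTree par)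
    (hLeafless : Leafless par)
    -- generations, enumerated with respect to a fixed vertex in generation 0
    (gen : V → ℤ) (hgen : ∀ u v : V, par v = some u → gen v = gen u + 1)
    (hgen0 : ∃ v₀ : V, gen v₀ = 0) (hgenroot : ∀ r : V, IsRoot par r → gen r = 0)
    -- the tree is symmetric and locally finite, with `γ_n` children in generation `n`
    (γ : ℤ → ℕ) (hfin : ∀ v : V, (children par v).Finite)
    (hγ : ∀ v : V, (children par v).ncard = γ (gen v))
    -- the weight is symmetric, with value `Λ n` on generation `n`
    (Λ : ℤ → 𝕜) (hΛ : ∀ n : ℤ, Λ n ≠ 0) (lam : V → 𝕜) (hlam : ∀ v : V, lam v = Λ (gen v))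
    {X : Type*} [NormedAddCommGroup X] [NormedSpace 𝕜 X] [CompleteSpace X]
    (ι : X →ₗ[𝕜] V → 𝕜) (p : ℝ) (T : X →L[𝕜] X) (hT : IsShiftRep par lam ι T) :
    -- the case `X = ℓ^p(V)`, `1 < p < ∞`
    ((1 < p ∧ IsLpSpaceRep ι (fun _ : V => (1 : 𝕜)) p) →
      ((Rooted par ∨ (Unrooted par ∧ ¬ HasFreeLeftEnd par)) →
        (ChaoticOp T ↔
          (∑' n : ℕ, (gamProd γ (n + 1) ^ (p / conjExp p) * lamProdPos Λ (n + 1) ^ p)⁻¹)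
            < ⊤)) ∧
      ((Unrooted par ∧ HasFreeLeftEnd par) →
        (ChaoticOp T ↔
          ((∑' n : ℕ, (gamProd γ (n + 1) ^ (p / conjExp p) * lamProdPos Λ (n + 1) ^ p)⁻¹)
              < ⊤ ∧
            (∑' n : ℕ, lamProdNeg Λ (n + 1) ^ p) < ⊤)))) ∧
    -- the case `X = c₀(V)`
    (IsC0SpaceRep ι (fun _ : V => (1 : 𝕜)) →
      ((Rooted par ∨ (Unrooted par ∧ ¬ HasFreeLeftEnd par)) →
        (ChaoticOp T ↔
          Tendsto (fun n : ℕ => gamProd γ n * lamProdPos Λ n) atTop (𝓝 ⊤))) ∧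
      ((Unrooted par ∧ HasFreeLeftEnd par) →
        (ChaoticOp T ↔
          (Tendsto (fun n : ℕ => gamProd γ n * lamProdPos Λ n) atTop (𝓝 ⊤) ∧
            Tendsto (fun n : ℕ => lamProdNeg Λ n) atTop (𝓝 0))))) := by
  have hS : SymTree par gen γ := ⟨hTree, hLeafless, hgen, hfin, hγ⟩
  have hg : ∀ n, Ga γ 0 n ≠ 0 := by
    obtain ⟨v, hv⟩ := hgen0
    rw [← hv]
    exact hS.Ga_ne v
  have hL : ∀ n, Lp Λ 0 n ≠ 0 := fun n => Finset.prod_ne_zero_iff.2 fun i _ => hΛ _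
  constructor
  · rintro ⟨hp, hrep⟩
    rw [conv_G_lp γ Λ p hp hg hL, conv_H_lp Λ p hp]
    exact main_abs hS (good_lp ι p hp hrep) hΛ hlam hT hgen0
  · intro hrep
    rw [conv_G_c0 γ Λ hg hL]
    simp_rw [lamProdNeg_eq]
    rw [conv_H_c0]
    exact main_abs hS (good_c0 ι hrep) hΛ hlam hT hgen0
end PaperTree
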